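/- If every basic-star over the white vertices of OPT has efficiency strictly less than N/(4·OPT), and there exist at least N/2 unsatisfied components each satisfied by at least one star of a collection in which every white vertex of OPT appears at most twice, then we reach a contradiction; hence the maximum basic-star efficiency ρ* satisfies ρ* ≥ N/(4·OPT). -/

import Mathlib

/-!
Averaging argument. Exchanging the order of summation, a collection of stars that meets every
vertex of `T` at most twice has total cost at most `2 * ∑ v ∈ T, c v ≤ 2 * OPT`
(`sum_cost_le`). If every star had efficiency below `N / (4 * OPT)`, the stars together would
satisfy fewer than `N / (4 * OPT) * (2 * OPT) = N / 2` components, fewer than `U` contains.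
-/

/-- Double counting: if every `v ∈ T` lies in at most two of the sets `X i ⊆ T`, the total weight
of the `X i` is at most twice the weight of `T`. -/
theorem sum_cost_le {V : Type*} [DecidableEq V] (T : Finset V) (c : V → ℝ)
    (hc : ∀ v ∈ T, 0 < c v) (ℓ : ℕ) (X : Fin ℓ → Finset V) (hsub : ∀ i, X i ⊆ T)
    (hmult : ∀ v ∈ T, (Finset.univ.filter fun i => v ∈ X i).card ≤ 2) :
    ∑ i, ∑ v ∈ X i, c v ≤ 2 * ∑ v ∈ T, c v := by
  have hswap : ∑ i, ∑ v ∈ X i, c v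
      = ∑ v ∈ T, ∑ _i ∈ Finset.univ.filter (fun i => v ∈ X i), c v := by
    apply Finset.sum_comm'
    intro i v
    simp only [Finset.mem_univ, true_and, Finset.mem_filter]
    exact ⟨fun h => ⟨h, hsub i h⟩, fun h => h.1⟩
  rw [hswap, Finset.mul_sum]
  refine Finset.sum_le_sum fun v hv => ?_
  rw [Finset.sum_const, nsmul_eq_mul]
  exact mul_le_mul_of_nonneg_right (by exact_mod_cast hmult v hv) (hc v hv).le


/-- If every basic-star over the white vertices `T` of OPT (total weight at most `OPT`) had
efficiency strictly below `N/(4·OPT)`, while at least `N/2` unsatisfied components are each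
satisfied by a star of a collection covering `T` with multiplicity at most 2, we would get a
contradiction; hence some star has efficiency at least `N/(4·OPT)`. -/
theorem stmt_12 {V Comp : Type*} [DecidableEq V] (T : Finset V) (c : V → ℝ)
    (hc : ∀ v ∈ T, 0 < c v) (OPT : ℝ) (hOPT : 0 < OPT) (hT : ∑ v ∈ T, c v ≤ OPT)
    (ℓ : ℕ) (X : Fin ℓ → Finset V) (Φ : Fin ℓ → Finset Comp)
    (hsub : ∀ i, X i ⊆ T) (hne : ∀ i, (X i).Nonempty)
    (hmult : ∀ v ∈ T, (Finset.univ.filter fun i => v ∈ X i).card ≤ 2)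
    (N : ℕ) (hN : 0 < N) (U : Finset Comp) (hU : (N : ℝ) ≤ 2 * U.card)
    (hcover : ∀ Cc ∈ U, ∃ i, Cc ∈ Φ i) :
    ∃ i, (N : ℝ) / (4 * OPT) ≤ ((Φ i).card : ℝ) / ∑ v ∈ X i, c v := by
  classical
  by_contra! hlt
  have hcost : ∀ i, 0 < ∑ v ∈ X i, c v := fun i =>
    Finset.sum_pos (fun v hv => hc v (hsub i hv)) (hne i)
  have hΦ : ∀ i, ((Φ i).card : ℝ) < N / (4 * OPT) * ∑ v ∈ X i, c v := fun i =>
    (div_lt_iff₀ (hcost i)).1 (hlt i)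
  have hNpos : (0 : ℝ) < N := by exact_mod_cast hN
  -- There is at least one star, so summing the strict inequalities keeps them strict.
  have hstar : (Finset.univ : Finset (Fin ℓ)).Nonempty := by
    have hUpos : 0 < U.card := by
      have : (0 : ℝ) < U.card := by linarith
      exact_mod_cast this
    obtain ⟨C, hC⟩ := Finset.card_pos.1 hUpos
    obtain ⟨i, -⟩ := hcover C hC
    exact ⟨i, Finset.mem_univ i⟩
  have hUle : (U.card : ℝ) ≤ ∑ i, ((Φ i).card : ℝ) := by
    have hUsub : U ⊆ Finset.univ.biUnion Φ := fun C hC => by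
      simpa using hcover C hC
    exact_mod_cast (Finset.card_le_card hUsub).trans Finset.card_biUnion_le
  have hsum : ∑ i, ((Φ i).card : ℝ) < N / (4 * OPT) * ∑ i, ∑ v ∈ X i, c v := by
    rw [Finset.mul_sum]
    exact Finset.sum_lt_sum_of_nonempty hstar fun i _ => hΦ i
  have htotal : ∑ i, ∑ v ∈ X i, c v ≤ 2 * OPT := by
    linarith [sum_cost_le T c hc ℓ X hsub hmult]
  have hbound : N / (4 * OPT) * ∑ i, ∑ v ∈ X i, c v ≤ N / (4 * OPT) * (2 * OPT) :=
    mul_le_mul_of_nonneg_left htotal (by positivity)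
  have hhalf : (N : ℝ) / (4 * OPT) * (2 * OPT) = N / 2 := by
    field_simp
    norm_num
  linarith
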